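/- Let n ≥ 1, let A ∈ M_n(ℝ), and let N > 0 and Ξ > 0 be real numbers. Consider the 2n×2n real Hamiltonian matrix H = fromBlocks A (N·I) (−Ξ²·I) (−Aᵀ). Then H is hyperbolic — i.e. regarded as a complex matrix it has no purely imaginary eigenvalue iω with ω ∈ ℝ — if and only if for every ω ∈ ℝ, σ_min(A − iωI) > Ξ√N, where A is regarded as a complex n×n matrix. -/

import Mathlib

open Matrix

/-- The smallest singular value of a complex matrix: the infimum of `‖M v‖` over
unit vectors `v ∈ ℂ^n`. -/
noncomputable def sigmaMin {n : ℕ} (M : Matrix (Fin n) (Fin n) ℂ) : ℝ :=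
  sInf {r : ℝ | ∃ v : EuclideanSpace ℂ (Fin n), ‖v‖ = 1 ∧ r = ‖Matrix.toEuclideanLin M v‖}


theorem normSq_dot {n : ℕ} (w : EuclideanSpace ℂ (Fin n)) :
    star w.ofLp ⬝ᵥ w.ofLp = ((‖w‖ ^ 2 : ℝ) : ℂ) := by
  have h := EuclideanSpace.inner_eq_star_dotProduct w w
  rw [inner_self_eq_norm_sq_to_K] at h
  rw [dotProduct_comm, ← h]
  push_cast
  rfl

theorem gram_dot {n : ℕ} (M : Matrix (Fin n) (Fin n) ℂ) (w : EuclideanSpace ℂ (Fin n)) :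
    star w.ofLp ⬝ᵥ ((Mᴴ * M) *ᵥ w.ofLp) = ((‖Matrix.toEuclideanLin M w‖ ^ 2 : ℝ) : ℂ) := by
  rw [← normSq_dot, Matrix.ofLp_toEuclideanLin_apply, ← Matrix.mulVec_mulVec,
    Matrix.star_mulVec, Matrix.dotProduct_mulVec]

theorem sigmaMin_le {n : ℕ} (M : Matrix (Fin n) (Fin n) ℂ) (v : EuclideanSpace ℂ (Fin n))
    (hv : ‖v‖ = 1) : sigmaMin M ≤ ‖Matrix.toEuclideanLin M v‖ := by
  apply csInf_le
  · exact ⟨0, by rintro r ⟨v, -, rfl⟩; exact norm_nonneg _⟩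
  · exact ⟨v, hv, rfl⟩

theorem sigmaMin_attained {n : ℕ} (hn : 1 ≤ n) (M : Matrix (Fin n) (Fin n) ℂ) :
    ∃ v : EuclideanSpace ℂ (Fin n), ‖v‖ = 1 ∧ sigmaMin M = ‖Matrix.toEuclideanLin M v‖ := by
  haveI : Nonempty (Fin n) := ⟨⟨0, hn⟩⟩
  have hc : IsCompact (Metric.sphere (0 : EuclideanSpace ℂ (Fin n)) 1) := isCompact_sphere _ _
  have hne : (Metric.sphere (0 : EuclideanSpace ℂ (Fin n)) 1).Nonempty :=
    ⟨EuclideanSpace.single ⟨0, hn⟩ 1, by simp⟩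
  have hcont : Continuous (fun v : EuclideanSpace ℂ (Fin n) => ‖Matrix.toEuclideanLin M v‖) :=
    (LinearMap.continuous_of_finiteDimensional (Matrix.toEuclideanLin M)).norm
  obtain ⟨v, hv, hmin⟩ := hc.exists_isMinOn hne hcont.continuousOn
  have hv1 : ‖v‖ = 1 := by simpa using hv
  refine ⟨v, hv1, le_antisymm (sigmaMin_le M v hv1) ?_⟩
  refine le_csInf ⟨‖Matrix.toEuclideanLin M v‖, v, hv1, rfl⟩ ?_
  rintro r ⟨w, hw, rfl⟩
  exact hmin (by simpa using hw)

theorem sigmaMin_mul_le {n : ℕ} (M : Matrix (Fin n) (Fin n) ℂ) (v : EuclideanSpace ℂ (Fin n)) :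
    sigmaMin M * ‖v‖ ≤ ‖Matrix.toEuclideanLin M v‖ := by
  by_cases h : v = 0
  · simp [h]
  have hp : 0 < ‖v‖ := norm_pos_iff.mpr h
  have h1 := sigmaMin_le M (((‖v‖⁻¹ : ℝ) : ℂ) • v) (by
    rw [norm_smul, Complex.norm_real, Real.norm_of_nonneg (by positivity)]
    field_simp)
  rw [map_smul, norm_smul, Complex.norm_real, Real.norm_of_nonneg (by positivity)] at h1
  calc _ ≤ (‖v‖⁻¹ * ‖Matrix.toEuclideanLin M v‖) * ‖v‖ := by gcongr
    _ = _ := by field_simp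

open scoped ComplexOrder in
theorem sigmaMin_gram {n : ℕ} (hn : 1 ≤ n) (M : Matrix (Fin n) (Fin n) ℂ) :
    ∃ x : Fin n → ℂ, x ≠ 0 ∧ (Mᴴ * M) *ᵥ x = ((sigmaMin M ^ 2 : ℝ) : ℂ) • x := by
  obtain ⟨v, hv, hs⟩ := sigmaMin_attained hn M
  have hs0 : 0 ≤ sigmaMin M := by rw [hs]; exact norm_nonneg _
  have key : ∀ w : EuclideanSpace ℂ (Fin n),
      star w.ofLp ⬝ᵥ ((Mᴴ * M - ((sigmaMin M ^ 2 : ℝ) : ℂ) • (1 : Matrix (Fin n) (Fin n) ℂ)) *ᵥ w.ofLp)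
        = ((‖Matrix.toEuclideanLin M w‖ ^ 2 - sigmaMin M ^ 2 * ‖w‖ ^ 2 : ℝ) : ℂ) := by
    intro w
    rw [Matrix.sub_mulVec, dotProduct_sub, gram_dot, Matrix.smul_mulVec, Matrix.one_mulVec,
      dotProduct_smul, normSq_dot]
    push_cast
    rfl
  have hpsd : (Mᴴ * M - ((sigmaMin M ^ 2 : ℝ) : ℂ) • (1 : Matrix (Fin n) (Fin n) ℂ)).PosSemidef := by
    refine Matrix.PosSemidef.of_dotProduct_mulVec_nonneg ?_ ?_
    · apply Matrix.IsHermitian.sub (Matrix.isHermitian_conjTranspose_mul_self M)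
      rw [Matrix.IsHermitian, Matrix.conjTranspose_smul, Matrix.conjTranspose_one]
      congr 1
      exact Complex.conj_ofReal _
    · intro x
      have := key (WithLp.toLp 2 x)
      simp only at this
      rw [this]
      rw [Complex.zero_le_real, ← mul_pow, sub_nonneg]
      have := sigmaMin_mul_le M (WithLp.toLp 2 x)
      gcongr
  refine ⟨v.ofLp, ?_, ?_⟩
  · intro h
    have : v = 0 := by ext i; simpa using congrFun h i
    simp [this] at hv
  · have h := (hpsd.dotProduct_mulVec_zero_iff v.ofLp).mp (by rw [key, hv, ← hs]; simp)
    rw [Matrix.sub_mulVec, Matrix.smul_mulVec, Matrix.one_mulVec, sub_eq_zero] at h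
    exact h

theorem sigmaMin_le_of_gram {n : ℕ} (M : Matrix (Fin n) (Fin n) ℂ) (s : ℝ) (hs : 0 ≤ s)
    (x : Fin n → ℂ) (hx : x ≠ 0) (h : (Mᴴ * M) *ᵥ x = ((s ^ 2 : ℝ) : ℂ) • x) :
    sigmaMin M ≤ s := by
  have h1 := gram_dot M (WithLp.toLp 2 x)
  have h2 := normSq_dot (WithLp.toLp 2 x)
  have h3 := sigmaMin_mul_le M (WithLp.toLp 2 x)
  have hp : 0 < ‖WithLp.toLp 2 x‖ := norm_pos_iff.mpr (by simpa using hx)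
  simp only at h1 h2
  rw [h, dotProduct_smul, h2, smul_eq_mul, ← Complex.ofReal_mul, Complex.ofReal_inj, ← mul_pow] at h1
  have h4 : s * ‖WithLp.toLp 2 x‖ = ‖Matrix.toEuclideanLin M (WithLp.toLp 2 x)‖ :=
    (pow_left_inj₀ (by positivity) (norm_nonneg _) two_ne_zero).mp h1
  rw [← h4] at h3
  exact le_of_mul_le_mul_right h3 hp

theorem spec_iff {n : ℕ} (A : Matrix (Fin n) (Fin n) ℝ) (N Ξ : ℝ) (hN : 0 < N) (ω : ℝ) :
    Complex.I * (ω : ℂ) ∈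
        spectrum ℂ ((Matrix.fromBlocks A (N • (1 : Matrix (Fin n) (Fin n) ℝ))
          ((-(Ξ ^ 2)) • (1 : Matrix (Fin n) (Fin n) ℝ)) (-Aᵀ)).map Complex.ofReal) ↔
    ∃ x : Fin n → ℂ, x ≠ 0 ∧
      ((A.map Complex.ofReal - ((ω : ℂ) * Complex.I) • (1 : Matrix (Fin n) (Fin n) ℂ))ᴴ *
       (A.map Complex.ofReal - ((ω : ℂ) * Complex.I) • (1 : Matrix (Fin n) (Fin n) ℂ))) *ᵥ x =
        (((Ξ * Real.sqrt N) ^ 2 : ℝ) : ℂ) • x := by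
  have hNc : (N : ℂ) ≠ 0 := by exact_mod_cast hN.ne'
  set M := A.map Complex.ofReal - ((ω : ℂ) * Complex.I) • (1 : Matrix (Fin n) (Fin n) ℂ) with hM
  have hMH : Mᴴ = (Aᵀ).map Complex.ofReal + ((ω : ℂ) * Complex.I) • (1 : Matrix (Fin n) (Fin n) ℂ) := by
    rw [hM]
    ext i j
    by_cases hij : i = j
    · simp [hij]
    · simp [hij, Ne.symm hij]
  have hs : (((Ξ * Real.sqrt N) ^ 2 : ℝ) : ℂ) = (N : ℂ) * (Ξ : ℂ) ^ 2 := by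
    rw [mul_pow, Real.sq_sqrt hN.le]; push_cast; ring
  have hB : algebraMap ℂ (Matrix (Fin n ⊕ Fin n) (Fin n ⊕ Fin n) ℂ) (Complex.I * (ω : ℂ)) -
      (Matrix.fromBlocks A (N • (1 : Matrix (Fin n) (Fin n) ℝ))
          ((-(Ξ ^ 2)) • (1 : Matrix (Fin n) (Fin n) ℝ)) (-Aᵀ)).map Complex.ofReal =
      Matrix.fromBlocks (-M) (-((N : ℂ) • (1 : Matrix (Fin n) (Fin n) ℂ)))
        (((Ξ : ℂ) ^ 2) • (1 : Matrix (Fin n) (Fin n) ℂ)) Mᴴ := by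
    rw [hMH, hM, Algebra.algebraMap_eq_smul_one]
    ext (i | i) (j | j) <;> by_cases hij : i = j <;> simp [hij, Matrix.one_apply] <;> ring
  rw [spectrum.mem_iff, hB, Matrix.isUnit_iff_isUnit_det, isUnit_iff_ne_zero, not_not,
    ← Matrix.exists_mulVec_eq_zero_iff, hs]
  have hexp : ∀ x y : Fin n → ℂ, Matrix.fromBlocks (-M) (-((N : ℂ) • (1 : Matrix (Fin n) (Fin n) ℂ)))
        (((Ξ : ℂ) ^ 2) • (1 : Matrix (Fin n) (Fin n) ℂ)) Mᴴ *ᵥ (Sum.elim x y) = 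
        Sum.elim (-(M *ᵥ x) - (N : ℂ) • y) (((Ξ : ℂ) ^ 2) • x + Mᴴ *ᵥ y) := by
    intro x y
    rw [Matrix.fromBlocks_mulVec]
    simp [Matrix.neg_mulVec, Matrix.smul_mulVec, sub_eq_add_neg]
  constructor
  · rintro ⟨v, hv, h⟩
    obtain ⟨x, y, rfl⟩ : ∃ x y, v = Sum.elim x y :=
      ⟨v ∘ Sum.inl, v ∘ Sum.inr, (Sum.elim_comp_inl_inr v).symm⟩
    rw [hexp] at h
    have h1 : -(M *ᵥ x) - (N : ℂ) • y = 0 := funext fun i => congrFun h (Sum.inl i)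
    have h2 : ((Ξ : ℂ) ^ 2) • x + Mᴴ *ᵥ y = 0 := funext fun i => congrFun h (Sum.inr i)
    have h3 : M *ᵥ x = -((N : ℂ) • y) := by
      rw [sub_eq_zero] at h1; rw [← h1, neg_neg]
    have h4 : Mᴴ *ᵥ y = -(((Ξ : ℂ) ^ 2) • x) := by
      rw [eq_neg_iff_add_eq_zero, add_comm]; exact h2
    refine ⟨x, ?_, ?_⟩
    · rintro rfl
      apply hv
      have : y = 0 := by simpa [hN.ne'] using h3
      rw [this]
      ext (i | i) <;> rfl
    · rw [← Matrix.mulVec_mulVec, h3, Matrix.mulVec_neg, Matrix.mulVec_smul, h4, smul_neg, neg_neg,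
        smul_smul]
  · rintro ⟨x, hx, h⟩
    refine ⟨Sum.elim x (-((N : ℂ)⁻¹ • (M *ᵥ x))), ?_, ?_⟩
    · intro h0
      exact hx (funext fun i => congrFun h0 (Sum.inl i))
    · rw [hexp, Matrix.mulVec_neg, Matrix.mulVec_smul, Matrix.mulVec_mulVec, h, smul_neg, smul_smul,
        smul_smul, mul_inv_cancel₀ hNc, ← mul_assoc, inv_mul_cancel₀ hNc]
      ext (i | i) <;> simp

theorem sigmaMin_lip {n : ℕ} (hn : 1 ≤ n) (B : Matrix (Fin n) (Fin n) ℂ) (a b : ℝ) :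
    sigmaMin (B - ((a : ℂ) * Complex.I) • (1 : Matrix (Fin n) (Fin n) ℂ)) ≤
    sigmaMin (B - ((b : ℂ) * Complex.I) • (1 : Matrix (Fin n) (Fin n) ℂ)) + |a - b| := by
  obtain ⟨v, hv, hs⟩ := sigmaMin_attained hn
    (B - ((b : ℂ) * Complex.I) • (1 : Matrix (Fin n) (Fin n) ℂ))
  rw [hs]
  refine (sigmaMin_le _ v hv).trans ?_
  have : Matrix.toEuclideanLin (B - ((a : ℂ) * Complex.I) • (1 : Matrix (Fin n) (Fin n) ℂ)) v =
      Matrix.toEuclideanLin (B - ((b : ℂ) * Complex.I) • (1 : Matrix (Fin n) (Fin n) ℂ)) v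
        + (((b - a : ℝ) : ℂ) * Complex.I) • v := by
    ext i
    simp [Matrix.ofLp_toEuclideanLin_apply, Matrix.sub_mulVec, Matrix.smul_mulVec]
    ring
  rw [this]
  refine (norm_add_le _ _).trans ?_
  rw [norm_smul, hv, norm_mul, Complex.norm_I, Complex.norm_real, Real.norm_eq_abs, abs_sub_comm]
  simp

theorem sigmaMin_grow {n : ℕ} (hn : 1 ≤ n) (B : Matrix (Fin n) (Fin n) ℂ) :
    ∃ C : ℝ, ∀ a : ℝ, a - C ≤
      sigmaMin (B - ((a : ℂ) * Complex.I) • (1 : Matrix (Fin n) (Fin n) ℂ)) := by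
  refine ⟨‖LinearMap.toContinuousLinearMap (Matrix.toEuclideanLin B)‖, fun a => ?_⟩
  obtain ⟨v, hv, hs⟩ := sigmaMin_attained hn
    (B - ((a : ℂ) * Complex.I) • (1 : Matrix (Fin n) (Fin n) ℂ))
  rw [hs]
  have h1 := (LinearMap.toContinuousLinearMap (Matrix.toEuclideanLin B)).le_opNorm v
  rw [hv, mul_one, LinearMap.coe_toContinuousLinearMap'] at h1
  have : Matrix.toEuclideanLin (B - ((a : ℂ) * Complex.I) • (1 : Matrix (Fin n) (Fin n) ℂ)) v =
      Matrix.toEuclideanLin B v - ((a : ℂ) * Complex.I) • v := by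
    ext i
    simp [Matrix.ofLp_toEuclideanLin_apply, Matrix.sub_mulVec, Matrix.smul_mulVec]
  have h2 := norm_sub_norm_le (((a : ℂ) * Complex.I) • v) (Matrix.toEuclideanLin B v)
  rw [this, norm_sub_rev]
  rw [norm_smul, hv, norm_mul, Complex.norm_I, Complex.norm_real, Real.norm_eq_abs, mul_one, mul_one] at h2
  linarith [le_abs_self a]

/-- Lemma 2: the Hamiltonian matrix `fromBlocks A (N·I) (−Ξ²·I) (−Aᵀ)` is hyperbolic
(no purely imaginary eigenvalue) if and only if `σ_min(A − iωI) > Ξ√N` for all `ω ∈ ℝ`. -/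
theorem stmt_6 (n : ℕ) (hn : 1 ≤ n) (A : Matrix (Fin n) (Fin n) ℝ)
    (N Ξ : ℝ) (hN : 0 < N) (hΞ : 0 < Ξ) :
    (∀ ω : ℝ, Complex.I * (ω : ℂ) ∉
        spectrum ℂ ((Matrix.fromBlocks A (N • (1 : Matrix (Fin n) (Fin n) ℝ))
          ((-(Ξ ^ 2)) • (1 : Matrix (Fin n) (Fin n) ℝ)) (-Aᵀ)).map Complex.ofReal)) ↔
      (∀ ω : ℝ, Ξ * Real.sqrt N <
        sigmaMin (A.map Complex.ofReal -
          ((ω : ℂ) * Complex.I) • (1 : Matrix (Fin n) (Fin n) ℂ))) := by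
  have hs : 0 ≤ Ξ * Real.sqrt N := by positivity
  constructor
  · intro h
    by_contra! hcon
    obtain ⟨a, ha⟩ := hcon
    obtain ⟨C, hC⟩ := sigmaMin_grow hn (A.map Complex.ofReal)
    have hcont : Continuous (fun ω : ℝ => sigmaMin (A.map Complex.ofReal -
        ((ω : ℂ) * Complex.I) • (1 : Matrix (Fin n) (Fin n) ℂ))) := by
      apply LipschitzWith.continuous (K := 1)
      apply LipschitzWith.of_le_add
      intro x y
      exact sigmaMin_lip hn _ x y
    obtain ⟨ω, hω⟩ := mem_range_of_exists_le_of_exists_ge hcont ⟨a, ha⟩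
      ⟨Ξ * Real.sqrt N + C, by simpa using hC (Ξ * Real.sqrt N + C)⟩
    apply h ω
    rw [spec_iff A N Ξ hN]
    have := sigmaMin_gram hn (A.map Complex.ofReal -
        ((ω : ℂ) * Complex.I) • (1 : Matrix (Fin n) (Fin n) ℂ))
    simp only at hω
    rwa [hω] at this
  · intro h ω hmem
    rw [spec_iff A N Ξ hN] at hmem
    obtain ⟨x, hx, hx2⟩ := hmem
    exact absurd (h ω) (not_lt.mpr (sigmaMin_le_of_gram _ _ hs x hx hx2))
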